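/- arXiv:1905.10061 — 8 statements merged into one kernel-verified Lean document; each statement's English description precedes it below -/
import Mathlib

section
/- Let (X,d) be a compact metric space, let φ_n : X → X (n ≥ 1) be a sequence of homeomorphisms, and let n₀ ≥ 1 be a natural number. The non-autonomous system (X, φ_{1,∞}) is n₀-expansive (in the two-sided sense) if and only if there exists a finite open cover 𝓑 of X such that for every bisequence {B_m}_{m∈ℤ} of members of 𝓑, the intersection ⋂_{m∈ℤ} (φ₁^m)⁻¹(closure(B_m)) has at most n₀ elements. -/
open Set Metric Filter Topology

/-- `phiComp φ n = φ_n ∘ ⋯ ∘ φ_1` (with `phiComp φ 0 = id`), the compositions of the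
non-autonomous system `φ_{1,∞}` given by the maps `φ 1, φ 2, …` (`φ 0` is unused). -/
def phiComp {X : Type*} (φ : ℕ → X → X) : ℕ → X → X
  | 0 => id
  | n + 1 => φ (n + 1) ∘ phiComp φ n

/-- For a system of homeomorphisms, `phiCompH φ n = φ_n ∘ ⋯ ∘ φ_1` as a homeomorphism. -/
def phiCompH {X : Type*} [TopologicalSpace X] (φ : ℕ → X ≃ₜ X) : ℕ → X ≃ₜ X
  | 0 => Homeomorph.refl X
  | n + 1 => (phiCompH φ n).trans (φ (n + 1))

/-- Two-sided compositions: `phiZ φ i = φ₁^i` for `i ≥ 0` and `φ₁^i = (φ₁^{|i|})⁻¹` for `i < 0`. -/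
def phiZ {X : Type*} [TopologicalSpace X] (φ : ℕ → X ≃ₜ X) (i : ℤ) : X → X :=
  if 0 ≤ i then ⇑(phiCompH φ i.toNat) else ⇑(phiCompH φ (-i).toNat).symm

/-- `segComp φ a m = φ_{a+m} ∘ ⋯ ∘ φ_{a+1}`. -/
def segComp {X : Type*} (φ : ℕ → X → X) (a : ℕ) : ℕ → X → X
  | 0 => id
  | m + 1 => φ (a + m + 1) ∘ segComp φ a m

/-- The `k`-th iterate system `(φ_{1,∞})^k`: its `n`-th map is
`φ_{nk} ∘ ⋯ ∘ φ_{(n-1)k+1}`. -/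
def iterateSys {X : Type*} (φ : ℕ → X → X) (k : ℕ) : ℕ → X → X :=
  fun n => segComp φ ((n - 1) * k) k

/-- `(X, φ_{1,∞})` is `n₀`-expansive (one-sided). -/
def IsNExpansive {X : Type*} [MetricSpace X] (φ : ℕ → X → X) (n₀ : ℕ) : Prop :=
  ∃ c > (0 : ℝ), ∀ x : X,
    {y : X | ∀ i : ℕ, dist (phiComp φ i x) (phiComp φ i y) ≤ c}.encard ≤ (n₀ : ℕ∞)

/-- `(X, φ_{1,∞})` is ℵ₀-expansive (one-sided). -/
def IsAleph0Expansive {X : Type*} [MetricSpace X] (φ : ℕ → X → X) : Prop :=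
  ∃ c > (0 : ℝ), ∀ x : X,
    {y : X | ∀ i : ℕ, dist (phiComp φ i x) (phiComp φ i y) ≤ c}.Countable

/-- `(X, φ_{1,∞})` is `n₀`-expansive in the two-sided sense. -/
def IsNExpansiveZ {X : Type*} [MetricSpace X] (φ : ℕ → X ≃ₜ X) (n₀ : ℕ) : Prop :=
  ∃ c > (0 : ℝ), ∀ x : X,
    {y : X | ∀ i : ℤ, dist (phiZ φ i x) (phiZ φ i y) ≤ c}.encard ≤ (n₀ : ℕ∞)

/-- `(X, φ_{1,∞})` is ℵ₀-expansive in the two-sided sense. -/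
def IsAleph0ExpansiveZ {X : Type*} [MetricSpace X] (φ : ℕ → X ≃ₜ X) : Prop :=
  ∃ c > (0 : ℝ), ∀ x : X,
    {y : X | ∀ i : ℤ, dist (phiZ φ i x) (phiZ φ i y) ≤ c}.Countable

/-- `(X, φ_{1,∞})` is continuum-wise expansive. -/
def IsCwExpansive {X : Type*} [MetricSpace X] (φ : ℕ → X → X) : Prop :=
  ∃ c > (0 : ℝ), ∀ C : Set X, IsCompact C → IsConnected C → C.Nontrivial →
    ∃ n : ℕ, c < Metric.diam (phiComp φ n '' C)

/-- `(X, φ_{1,∞})` is meagre-expansive (one-sided). -/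
def IsMeagreExpansive {X : Type*} [MetricSpace X] (φ : ℕ → X → X) : Prop :=
  ∃ c > (0 : ℝ), ∀ x : X,
    IsNowhereDense {y : X | ∀ i : ℕ, dist (phiComp φ i x) (phiComp φ i y) ≤ c}

/-!
If `f i u` and `f i v` lie in the closure of the same set of diameter at most `c`, for every `i`,
then the orbits of `u` and `v` never separate beyond `c`. Hence any cover by finitely many open
sets of diameter at most an expansivity constant is a generator. Conversely, if `c` is smaller than
a Lebesgue number of a generator, then for every `i` the points within `c` of `f i x` all lie in
one member of the cover, so the points whose orbits follow that of `x` up to `c` lie in one of the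
intersections controlled by the generator.
-/

section OrbitClosedBall

variable {ι Y X : Type*} [PseudoMetricSpace X]

/-- The closed dynamical ball `Γ_c(x)`: the points whose orbit under the family `f` stays within `c`
of the orbit of `x`. The maps of the family may go from one type to another, since they are never
composed here. -/
def orbitClosedBall (f : ι → Y → X) (c : ℝ) (x : Y) : Set Y :=
  {y | ∀ i, dist (f i x) (f i y) ≤ c}

theorem iInter_preimage_closure_subset_orbitClosedBall {f : ι → Y → X} {c : ℝ} (hc : 0 ≤ c)
    {B : ι → Set X} (hB : ∀ i, ediam (B i) ≤ ENNReal.ofReal c) {x : Y}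
    (hx : x ∈ ⋂ i, f i ⁻¹' closure (B i)) :
    ⋂ i, f i ⁻¹' closure (B i) ⊆ orbitClosedBall f c x := by
  intro y hy i
  rw [← edist_le_ofReal hc]
  calc
    edist (f i x) (f i y) ≤ ediam (closure (B i)) :=
      edist_le_ediam_of_mem (mem_iInter.1 hx i) (mem_iInter.1 hy i)
    _ = ediam (B i) := ediam_closure _
    _ ≤ ENNReal.ofReal c := hB i

theorem exists_orbitClosedBall_subset_iInter_preimage [CompactSpace X] (f : ι → Y → X)
    {𝓑 : Set (Set X)} (hopen : ∀ B ∈ 𝓑, IsOpen B) (hcover : ⋃₀ 𝓑 = univ) :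
    ∃ c > 0, ∀ x, ∃ B : ι → Set X, (∀ i, B i ∈ 𝓑) ∧
      orbitClosedBall f c x ⊆ ⋂ i, f i ⁻¹' B i := by
  obtain ⟨δ, hδ, hball⟩ := lebesgue_number_lemma_of_metric_sUnion isCompact_univ hopen hcover.ge
  refine ⟨δ / 2, half_pos hδ, fun x ↦ ?_⟩
  choose B hB𝓑 hB using fun i ↦ hball (f i x) (mem_univ _)
  refine ⟨B, hB𝓑, fun y hy ↦ mem_iInter.2 fun i ↦ hB i ?_⟩
  exact mem_ball'.2 ((hy i).trans_lt (half_lt_self hδ))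

end OrbitClosedBall

theorem exists_finset_isOpen_ediam_le_subset_sUnion {X : Type*} [PseudoEMetricSpace X] {s : Set X}
    (hs : TotallyBounded s) {ε : ENNReal} (hε : 0 < ε) :
    ∃ 𝓑 : Finset (Set X), (∀ B ∈ 𝓑, IsOpen B ∧ ediam B ≤ ε) ∧ s ⊆ ⋃₀ (𝓑 : Set (Set X)) := by
  classical
  obtain ⟨t, ht, hst⟩ := EMetric.totallyBounded_iff.1 hs (ε / 2) (ENNReal.half_pos hε.ne')
  have hdiam (x : X) : ediam (eball x (ε / 2)) ≤ ε :=
    ediam_eball_le.trans_eq (ENNReal.mul_div_cancel two_ne_zero ENNReal.ofNat_ne_top)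
  refine ⟨ht.toFinset.image fun x ↦ eball x (ε / 2),
    Finset.forall_mem_image.2 fun x _ ↦ ⟨isOpen_eball, hdiam x⟩, ?_⟩
  rwa [Finset.coe_image, ht.coe_toFinset, sUnion_image]

/-- An `n`-generator of a family `f` of maps: a finite open cover `𝓑` such that at most `n` points
follow any given itinerary through the closures of the members of `𝓑`. For a non-autonomous system
`φ` of homeomorphisms, take `f = phiZ φ`. -/
def IsNGenerator {ι Y X : Type*} [TopologicalSpace X] (f : ι → Y → X) (n : ℕ∞)
    (𝓑 : Finset (Set X)) : Prop :=
  (∀ B ∈ 𝓑, IsOpen B) ∧ ⋃₀ (𝓑 : Set (Set X)) = univ ∧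
    ∀ B : ι → Set X, (∀ i, B i ∈ 𝓑) → (⋂ i, f i ⁻¹' closure (B i)).encard ≤ n

section Generator

variable {ι Y X : Type*} [PseudoMetricSpace X] {f : ι → Y → X} {n : ℕ∞}

theorem exists_isNGenerator_of_orbitClosedBall_encard_le (hX : TotallyBounded (univ : Set X))
    {c : ℝ} (hc : 0 < c) (h : ∀ x, (orbitClosedBall f c x).encard ≤ n) :
    ∃ 𝓑, IsNGenerator f n 𝓑 := by
  obtain ⟨𝓑, h𝓑, hcover⟩ :=
    exists_finset_isOpen_ediam_le_subset_sUnion hX (ENNReal.ofReal_pos.2 hc)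
  refine ⟨𝓑, fun B hB ↦ (h𝓑 B hB).1, univ_subset_iff.1 hcover, fun B hB ↦ ?_⟩
  obtain hempty | ⟨x, hx⟩ := (⋂ i, f i ⁻¹' closure (B i)).eq_empty_or_nonempty
  · simp only [hempty, encard_empty, zero_le]
  · have hsub := iInter_preimage_closure_subset_orbitClosedBall hc.le (fun i ↦ (h𝓑 _ (hB i)).2) hx
    exact (encard_le_encard hsub).trans (h x)

theorem IsNGenerator.exists_orbitClosedBall_encard_le [CompactSpace X] {𝓑 : Finset (Set X)}
    (h𝓑 : IsNGenerator f n 𝓑) : ∃ c > 0, ∀ x, (orbitClosedBall f c x).encard ≤ n := by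
  obtain ⟨hopen, hcover, hcard⟩ := h𝓑
  obtain ⟨c, hc, hball⟩ := exists_orbitClosedBall_subset_iInter_preimage f hopen hcover
  refine ⟨c, hc, fun x ↦ ?_⟩
  obtain ⟨B, hB, hsub⟩ := hball x
  have hsub_closure : orbitClosedBall f c x ⊆ ⋂ i, f i ⁻¹' closure (B i) :=
    hsub.trans (iInter_mono fun i ↦ preimage_mono subset_closure)
  exact (encard_le_encard hsub_closure).trans (hcard B hB)

end Generator

theorem stmt0_general {ι Y X : Type*} [PseudoMetricSpace X] [CompactSpace X] (f : ι → Y → X)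
    (n : ℕ∞) :
    (∃ c > 0, ∀ x, (orbitClosedBall f c x).encard ≤ n) ↔ ∃ 𝓑, IsNGenerator f n 𝓑 :=
  ⟨fun ⟨_, hc, h⟩ ↦
    exists_isNGenerator_of_orbitClosedBall_encard_le isCompact_univ.totallyBounded hc h,
    fun ⟨_, h𝓑⟩ ↦ h𝓑.exists_orbitClosedBall_encard_le⟩

/-- On a compact metric space, a non-autonomous system of homeomorphisms is
`n₀`-expansive (two-sided sense) iff there is a finite open cover `𝓑` of `X` such that for
every bisequence `{B m}` of members of `𝓑`, `⋂ m, (φ₁^m)⁻¹ (closure (B m))` has at most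
`n₀` elements. -/
theorem stmt0 {X : Type*} [MetricSpace X] [CompactSpace X]
    (φ : ℕ → X ≃ₜ X) (n₀ : ℕ) (hn₀ : 1 ≤ n₀) :
    IsNExpansiveZ φ n₀ ↔
      ∃ 𝓑 : Finset (Set X), (∀ B ∈ 𝓑, IsOpen B) ∧ ⋃₀ (𝓑 : Set (Set X)) = Set.univ ∧
        ∀ B : ℤ → Set X, (∀ m, B m ∈ 𝓑) →
          (⋂ m : ℤ, phiZ φ m ⁻¹' closure (B m)).encard ≤ (n₀ : ℕ∞) :=
  stmt0_general (phiZ φ) n₀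
end

section
/- Let (X,d) be a compact metric space and let φ_n : X → X (n ≥ 1) be a sequence of homeomorphisms. The non-autonomous system (X, φ_{1,∞}) is ℵ₀-expansive (in the two-sided sense) if and only if there exists a finite open cover 𝓑 of X such that for every bisequence {B_m}_{m∈ℤ} of members of 𝓑, the intersection ⋂_{m∈ℤ} (φ₁^m)⁻¹(closure(B_m)) is countable. -/
open Set Metric Filter Topology

/-!
Over a bisequence drawn from a cover with `c`-small closures, any two points of the intersection
stay `c`-close at all times, so the intersection lies in a dynamical ball of radius `c`. Conversely,
if `c` is below a Lebesgue number of the cover, each dynamical ball of radius `c` lies in the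
intersection over some bisequence.
-/

section DynamicalBall

variable {ι : Sort*} {X Y : Type*} [PseudoMetricSpace X]

/-- The dynamical ball of radius `c` about `x`: the points whose orbit under the family `f` stays
within distance `c` of the orbit of `x` at every time. The times `ι` carry no structure, so that
one-sided and two-sided orbits are both covered, and `f i` need not be a self-map. -/
def dynamicalBall (f : ι → Y → X) (x : Y) (c : ℝ) : Set Y :=
  {y | ∀ i, dist (f i x) (f i y) ≤ c}

theorem iInter_preimage_subset_dynamicalBall {f : ι → Y → X} {S : ι → Set X} {c : ℝ} {x : Y}
    (hS : ∀ i, ∀ a ∈ S i, ∀ b ∈ S i, dist a b ≤ c) (hx : x ∈ ⋂ i, f i ⁻¹' S i) :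
    ⋂ i, f i ⁻¹' S i ⊆ dynamicalBall f x c :=
  fun _ hy i => hS i _ (mem_iInter.1 hx i) _ (mem_iInter.1 hy i)

theorem dynamicalBall_subset_iInter_preimage {f : ι → Y → X} {S : ι → Set X} {c : ℝ} {x : Y}
    (hS : ∀ i, closedBall (f i x) c ⊆ S i) :
    dynamicalBall f x c ⊆ ⋂ i, f i ⁻¹' S i :=
  fun _ hy => mem_iInter.2 fun i => hS i (mem_closedBall'.2 (hy i))

end DynamicalBall

section Cover

variable {X : Type*} [PseudoMetricSpace X] {s : Set X}

theorem dist_le_of_mem_closure_ball {x a b : X} {r : ℝ}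
    (ha : a ∈ closure (ball x r)) (hb : b ∈ closure (ball x r)) : dist a b ≤ 2 * r :=
  calc
    dist a b ≤ dist a x + dist b x := dist_triangle_right a b x
    _ ≤ r + r := add_le_add (closure_ball_subset_closedBall ha) (closure_ball_subset_closedBall hb)
    _ = 2 * r := (two_mul r).symm

theorem exists_finset_isOpen_cover_dist_closure_le (hs : TotallyBounded s) {c : ℝ} (hc : 0 < c) :
    ∃ 𝓑 : Finset (Set X), (∀ B ∈ 𝓑, IsOpen B) ∧ s ⊆ ⋃₀ (𝓑 : Set (Set X)) ∧
      ∀ B ∈ 𝓑, ∀ a ∈ closure B, ∀ b ∈ closure B, dist a b ≤ c := by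
  classical
  obtain ⟨t, ht, hcover⟩ := totallyBounded_iff.1 hs (c / 2) (half_pos hc)
  refine ⟨ht.toFinset.image (ball · (c / 2)), ?_, ?_, ?_⟩
  · exact Finset.forall_mem_image.2 fun _ _ => isOpen_ball
  · simpa only [Finset.coe_image, Finite.coe_toFinset, sUnion_image] using hcover
  · exact Finset.forall_mem_image.2 fun _ _ a ha b hb =>
      (dist_le_of_mem_closure_ball ha hb).trans_eq (mul_div_cancel₀ c two_ne_zero)

theorem exists_pos_forall_closedBall_subset_of_isOpen_cover (hs : IsCompact s)
    {𝓑 : Set (Set X)} (hopen : ∀ B ∈ 𝓑, IsOpen B) (hcover : s ⊆ ⋃₀ 𝓑) :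
    ∃ c > 0, ∀ x ∈ s, ∃ B ∈ 𝓑, closedBall x c ⊆ B := by
  obtain ⟨δ, hδ, hball⟩ := lebesgue_number_lemma_of_metric_sUnion hs hopen hcover
  refine ⟨δ / 2, half_pos hδ, fun x hx => ?_⟩
  obtain ⟨B, hB, hxB⟩ := hball x hx
  exact ⟨B, hB, (closedBall_subset_ball (half_lt_self hδ)).trans hxB⟩

end Cover

/-- Besides countability, `p` can be the property of having at most `n₀` points or of being nowhere
dense, which gives the analogous criteria for `n₀`-expansiveness and meagre-expansiveness. -/
theorem stmt1_general {ι : Sort*} {X Y : Type*} [PseudoMetricSpace X] [CompactSpace X]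
    (f : ι → Y → X) {p : Set Y → Prop} (hp : Antitone p) (hp_empty : p ∅) :
    (∃ c > (0 : ℝ), ∀ x : Y, p (dynamicalBall f x c)) ↔
      ∃ 𝓑 : Finset (Set X), (∀ B ∈ 𝓑, IsOpen B) ∧ ⋃₀ (𝓑 : Set (Set X)) = univ ∧
        ∀ B : ι → Set X, (∀ i, B i ∈ 𝓑) → p (⋂ i, f i ⁻¹' closure (B i)) := by
  constructor
  · rintro ⟨c, hc, hball⟩
    obtain ⟨𝓑, hopen, hcover, hdist⟩ :=
      exists_finset_isOpen_cover_dist_closure_le (isCompact_univ (X := X)).totallyBounded hc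
    refine ⟨𝓑, hopen, univ_subset_iff.1 hcover, fun B hB => ?_⟩
    obtain hempty | ⟨x, hx⟩ := (⋂ i, f i ⁻¹' closure (B i)).eq_empty_or_nonempty
    · rwa [hempty]
    · exact hp (iInter_preimage_subset_dynamicalBall (fun i => hdist _ (hB i)) hx) (hball x)
  · rintro ⟨𝓑, hopen, hcover, hinter⟩
    obtain ⟨c, hc, hLebesgue⟩ :=
      exists_pos_forall_closedBall_subset_of_isOpen_cover isCompact_univ hopen hcover.ge
    refine ⟨c, hc, fun x => ?_⟩
    choose B hB hsub using fun i => hLebesgue (f i x) (mem_univ _)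
    exact hp (dynamicalBall_subset_iInter_preimage fun i => (hsub i).trans subset_closure)
      (hinter B hB)

/-- On a compact metric space, a non-autonomous system of homeomorphisms is
ℵ₀-expansive (two-sided sense) iff there is a finite open cover `𝓑` of `X` such that for
every bisequence `{B m}` of members of `𝓑`, `⋂ m, (φ₁^m)⁻¹ (closure (B m))` is countable. -/
theorem stmt1 {X : Type*} [MetricSpace X] [CompactSpace X] (φ : ℕ → X ≃ₜ X) :
    IsAleph0ExpansiveZ φ ↔
      ∃ 𝓑 : Finset (Set X), (∀ B ∈ 𝓑, IsOpen B) ∧ ⋃₀ (𝓑 : Set (Set X)) = Set.univ ∧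
        ∀ B : ℤ → Set X, (∀ m, B m ∈ 𝓑) →
          (⋂ m : ℤ, phiZ φ m ⁻¹' closure (B m)).Countable := by
  exact stmt1_general (phiZ φ) (fun _ _ => Set.Countable.mono) countable_empty
end

section
/- Let (X₁,d₁) and (X₂,d₂) be metric spaces with non-autonomous systems φ_{1,∞} and ψ_{1,∞} respectively, and equip X₁ × X₂ with the metric d((x₁,x₂),(y₁,y₂)) = max{d₁(x₁,y₁), d₂(x₂,y₂)}. If both (X₁, φ_{1,∞}) and (X₂, ψ_{1,∞}) are ℵ₀-expansive, then the product system (X₁ × X₂, {φ_n × ψ_n}_{n≥1}) is ℵ₀-expansive. -/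
open Set Metric Filter Topology

theorem phiComp_prodMap {α β : Type*} (φ : ℕ → α → α) (ψ : ℕ → β → β) (i : ℕ) :
    phiComp (fun n => Prod.map (φ n) (ψ n)) i = Prod.map (phiComp φ i) (phiComp ψ i) := by
  induction i with
  | zero => exact Prod.map_id.symm
  | succ i ih => simp only [phiComp, ih, Prod.map_comp_map]

section DynClosedBall

variable {X X₁ X₂ : Type*} [PseudoMetricSpace X] [PseudoMetricSpace X₁] [PseudoMetricSpace X₂]

/-- The closed dynamical ball `Γ_c(x)`: the points whose orbit under the non-autonomous system
`φ_{1,∞}` stays within distance `c` of the orbit of `x` at all times `i ≥ 0`. An ℵ₀-expansive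
system is one whose closed dynamical balls of some positive radius are all countable. -/
def dynClosedBall (φ : ℕ → X → X) (c : ℝ) (x : X) : Set X :=
  {y | ∀ i : ℕ, dist (phiComp φ i x) (phiComp φ i y) ≤ c}

theorem dynClosedBall_subset_dynClosedBall (φ : ℕ → X → X) {c c' : ℝ} (h : c ≤ c') (x : X) :
    dynClosedBall φ c x ⊆ dynClosedBall φ c' x :=
  fun _ hy i => (hy i).trans h

theorem dynClosedBall_prodMap (φ : ℕ → X₁ → X₁) (ψ : ℕ → X₂ → X₂) (c : ℝ) (x : X₁ × X₂) :
    dynClosedBall (fun n => Prod.map (φ n) (ψ n)) c x =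
      dynClosedBall φ c x.1 ×ˢ dynClosedBall ψ c x.2 := by
  ext y
  simp only [dynClosedBall, phiComp_prodMap, Prod.dist_eq, Prod.map_fst, Prod.map_snd,
    max_le_iff, forall_and, mem_prod, mem_ofPred_eq]

end DynClosedBall

theorem isAleph0Expansive_iff_countable_dynClosedBall {X : Type*} [MetricSpace X]
    {φ : ℕ → X → X} :
    IsAleph0Expansive φ ↔ ∃ c > (0 : ℝ), ∀ x, (dynClosedBall φ c x).Countable :=
  Iff.rfl

theorem stmt9_general {X₁ X₂ : Type*} [MetricSpace X₁] [MetricSpace X₂]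
    {φ : ℕ → X₁ → X₁} {ψ : ℕ → X₂ → X₂}
    (hφ : IsAleph0Expansive φ) (hψ : IsAleph0Expansive ψ) :
    IsAleph0Expansive (fun n => Prod.map (φ n) (ψ n)) := by
  rw [isAleph0Expansive_iff_countable_dynClosedBall] at hφ hψ ⊢
  obtain ⟨c₁, hc₁, hcount₁⟩ := hφ
  obtain ⟨c₂, hc₂, hcount₂⟩ := hψ
  refine ⟨min c₁ c₂, lt_min hc₁ hc₂, fun x => ?_⟩
  rw [dynClosedBall_prodMap]
  exact ((hcount₁ x.1).mono (dynClosedBall_subset_dynClosedBall φ (min_le_left c₁ c₂) x.1)).prod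
    ((hcount₂ x.2).mono (dynClosedBall_subset_dynClosedBall ψ (min_le_right c₁ c₂) x.2))

/-- The product (with the max metric, which is the product metric in Mathlib)
of two ℵ₀-expansive non-autonomous systems is ℵ₀-expansive. -/
theorem stmt9 {X₁ X₂ : Type*} [MetricSpace X₁] [MetricSpace X₂]
    (φ : ℕ → X₁ → X₁) (ψ : ℕ → X₂ → X₂)
    (hφ : ∀ n, 1 ≤ n → Continuous (φ n)) (hψ : ∀ n, 1 ≤ n → Continuous (ψ n))
    (h₁ : IsAleph0Expansive φ) (h₂ : IsAleph0Expansive ψ) :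
    IsAleph0Expansive (fun n => Prod.map (φ n) (ψ n)) :=
  stmt9_general h₁ h₂
end

section
/- Let (X,d) be a compact metric space and let φ_n : X → X (n ≥ 1) be a sequence of homeomorphisms. If (X, φ_{1,∞}) is ℵ₀-expansive in the two-sided sense, then the set A(X, φ_{1,∞}) of points with converging semi-orbits (points x for which the sequence (φ₁ⁿ(x))_{n→+∞} converges and the sequence (φ₁^{−n}(x))_{n→+∞} converges) is countable. -/
open Set Metric Filter Topology

/-! A bi-infinite sequence converging at both ends is a pair of continuous maps on the one-point
compactification of `ℕ`. When `X` is separable, the space of such pairs is second countable in the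
sup metric, so its subsets are Lindelöf: the orbits of the points with converging semi-orbits are
covered by countably many sup-balls of radius `c`. By expansivity each ball contains the orbits of
only countably many points. -/

theorem countable_of_forall_exists_mem_nhds_countable_preimage {α Z : Type*} [TopologicalSpace Z]
    [HereditarilyLindelofSpace Z] (F : α → Z) (hF : ∀ a, ∃ U ∈ 𝓝 (F a), (F ⁻¹' U).Countable) :
    Countable α := by
  rw [← countable_univ_iff, ← preimage_range F]
  refine (HereditarilyLindelofSpace.isLindelof (range F)).induction_on
    (p := fun s ↦ (F ⁻¹' s).Countable) (fun _ _ hst ht ↦ ht.mono (preimage_mono hst))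
    (fun S hS hcount ↦ by simpa only [preimage_sUnion] using hS.biUnion hcount) ?_
  rintro _ ⟨a, rfl⟩
  obtain ⟨U, hU, hcount⟩ := hF a
  exact ⟨U, mem_nhdsWithin_of_mem_nhds hU, hcount⟩

/-- The bi-infinite sequence `u`, converging to `a` at `+∞` and to `b` at `-∞`, as a point of a
function space with the sup metric. It is encoded as the pair of the extensions to `ℕ ∪ {∞}` of
`n ↦ u n` and `n ↦ u (-n)`, so `u 0` is recorded twice. -/
noncomputable def twoSidedExtension {X : Type*} [TopologicalSpace X] (u : ℤ → X) {a b : X}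
    (ha : Tendsto (fun n : ℕ ↦ u n) atTop (𝓝 a)) (hb : Tendsto (fun n : ℕ ↦ u (-n)) atTop (𝓝 b)) :
    C(OnePoint ℕ, X) × C(OnePoint ℕ, X) :=
  (OnePoint.continuousMapMkNat _ a ha, OnePoint.continuousMapMkNat _ b hb)

theorem dist_apply_le_dist_twoSidedExtension {X : Type*} [PseudoMetricSpace X] {u v : ℤ → X}
    {a b a' b' : X}
    (ha : Tendsto (fun n : ℕ ↦ u n) atTop (𝓝 a)) (hb : Tendsto (fun n : ℕ ↦ u (-n)) atTop (𝓝 b))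
    (ha' : Tendsto (fun n : ℕ ↦ v n) atTop (𝓝 a')) (hb' : Tendsto (fun n : ℕ ↦ v (-n)) atTop (𝓝 b'))
    (i : ℤ) :
    dist (u i) (v i) ≤ dist (twoSidedExtension u ha hb) (twoSidedExtension v ha' hb') := by
  set U := twoSidedExtension u ha hb
  set V := twoSidedExtension v ha' hb'
  obtain ⟨n, rfl | rfl⟩ := i.eq_nat_or_neg
  · calc dist (U.1 n) (V.1 n) ≤ dist U.1 V.1 := ContinuousMap.dist_apply_le_dist _
      _ ≤ dist U V := le_max_left _ _
  · calc dist (U.2 n) (V.2 n) ≤ dist U.2 V.2 := ContinuousMap.dist_apply_le_dist _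
      _ ≤ dist U V := le_max_right _ _

theorem stmt12_general {α X : Type*} [PseudoMetricSpace X] [TopologicalSpace.SeparableSpace X]
    (f : ℤ → α → X) {c : ℝ} (hc : 0 < c)
    (hexp : ∀ x : α, {y : α | ∀ i : ℤ, dist (f i x) (f i y) ≤ c}.Countable) :
    {x : α | (∃ a : X, Tendsto (fun n : ℕ ↦ f n x) atTop (𝓝 a)) ∧
      (∃ b : X, Tendsto (fun n : ℕ ↦ f (-n) x) atTop (𝓝 b))}.Countable := by
  set A : Set α := {x | _}
  choose a ha using fun x : A ↦ x.2.1
  choose b hb using fun x : A ↦ x.2.2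
  let F : A → C(OnePoint ℕ, X) × C(OnePoint ℕ, X) := fun x ↦
    twoSidedExtension (f · x) (ha x) (hb x)
  have : SecondCountableTopology X := UniformSpace.secondCountable_of_separable X
  refine countable_of_forall_exists_mem_nhds_countable_preimage F fun x ↦
    ⟨closedBall (F x) c, closedBall_mem_nhds _ hc, ?_⟩
  have hsub : F ⁻¹' closedBall (F x) c ⊆
      Subtype.val ⁻¹' {y : α | ∀ i : ℤ, dist (f i x) (f i y) ≤ c} := fun y hy i ↦
    calc dist (f i x) (f i y) ≤ dist (F x) (F y) :=
          dist_apply_le_dist_twoSidedExtension (u := (f · x)) (v := (f · y))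
            (ha x) (hb x) (ha y) (hb y) i
      _ ≤ c := mem_closedBall'.1 hy
  exact ((hexp x).preimage Subtype.val_injective).mono hsub

/-- On a compact metric space, if a system of homeomorphisms is ℵ₀-expansive
in the two-sided sense, then the set of points with converging semi-orbits is countable. -/
theorem stmt12 {X : Type*} [MetricSpace X] [CompactSpace X] (φ : ℕ → X ≃ₜ X)
    (hexp : IsAleph0ExpansiveZ φ) :
    {x : X |
      (∃ L : X, Filter.Tendsto (fun n : ℕ => phiZ φ (n : ℤ) x) Filter.atTop (nhds L)) ∧
      (∃ L : X, Filter.Tendsto (fun n : ℕ => phiZ φ (-(n : ℤ)) x) Filter.atTop (nhds L))}.Countable := by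
  obtain ⟨c, hc, hcountable⟩ := hexp
  exact stmt12_general (phiZ φ) hc hcountable
end

section
/- Let (X,d) be a metric space and let φ_n : X → X (n ≥ 1) be a sequence of continuous maps. If (X, φ_{1,∞}) is ℵ₀-expansive, then it is continuum-wise expansive. -/
open Set Metric Filter Topology

/-!
All points of a set whose images have diameter at most `c` stay `c`-close to any one of them, so a
non-degenerate connected set with small images would lie in the set that ℵ₀-expansivity makes
countable. But a countable subset of a metric space is totally disconnected.
-/

theorem continuous_phiComp {X : Type*} [TopologicalSpace X] {φ : ℕ → X → X}
    (hφ : ∀ n, 1 ≤ n → Continuous (φ n)) : ∀ n, Continuous (phiComp φ n)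
  | 0 => continuous_id
  | n + 1 => (hφ (n + 1) n.succ_pos).comp (continuous_phiComp hφ n)

theorem not_countable_of_isPreconnected_of_nontrivial {X : Type*} [MetricSpace X] {C : Set X}
    (hC : IsPreconnected C) (hnt : C.Nontrivial) : ¬C.Countable := fun hcount =>
  hnt.not_subsingleton (hcount.isTotallyDisconnected C Subset.rfl hC)

theorem exists_lt_dist_of_countable_of_isPreconnected {ι X Y : Type*} [MetricSpace X]
    [PseudoMetricSpace Y] {f : ι → X → Y} {c : ℝ} {x : X} {C : Set X}
    (hcount : {y | ∀ i, dist (f i x) (f i y) ≤ c}.Countable)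
    (hC : IsPreconnected C) (hnt : C.Nontrivial) : ∃ i, ∃ y ∈ C, c < dist (f i x) (f i y) := by
  by_contra! hclose
  exact not_countable_of_isPreconnected_of_nontrivial hC hnt
    (hcount.mono fun y hy i => hclose i y hy)

theorem ofReal_lt_ediam_of_lt_dist {X : Type*} [PseudoMetricSpace X] {s : Set X} {c : ℝ} {x y : X}
    (hc : 0 ≤ c) (hx : x ∈ s) (hy : y ∈ s) (h : c < dist x y) : ENNReal.ofReal c < ediam s :=
  ((ENNReal.ofReal_lt_ofReal_iff_of_nonneg hc).mpr h).trans_le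
    (edist_dist x y ▸ edist_le_ediam_of_mem hx hy)

theorem lt_diam_of_ofReal_lt_ediam {X : Type*} [PseudoMetricSpace X] {s : Set X} {c : ℝ}
    (hs : Bornology.IsBounded s) (h : ENNReal.ofReal c < ediam s) : c < diam s :=
  lt_imp_lt_of_le_imp_le (fun hle => (ENNReal.ofReal_toReal hs.ediam_ne_top).symm.trans_le
    (ENNReal.ofReal_le_ofReal hle)) h

-- `ediam` rather than `diam`, since `diam` is `0` on the unbounded images allowed here.
theorem stmt13_general {X : Type*} [MetricSpace X] {φ : ℕ → X → X} (hexp : IsAleph0Expansive φ) :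
    ∃ c > (0 : ℝ), ∀ C : Set X, IsPreconnected C → C.Nontrivial →
      ∃ n : ℕ, ENNReal.ofReal c < ediam (phiComp φ n '' C) := by
  obtain ⟨c, hc, hcount⟩ := hexp
  refine ⟨c, hc, fun C hC hnt => ?_⟩
  obtain ⟨x, hx⟩ := hnt.nonempty
  obtain ⟨n, y, hy, hlt⟩ := exists_lt_dist_of_countable_of_isPreconnected (hcount x) hC hnt
  exact ⟨n, ofReal_lt_ediam_of_lt_dist hc.le (mem_image_of_mem _ hx) (mem_image_of_mem _ hy) hlt⟩

/-- Every ℵ₀-expansive non-autonomous system is continuum-wise expansive. -/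
theorem stmt13 {X : Type*} [MetricSpace X] (φ : ℕ → X → X)
    (hφ : ∀ n, 1 ≤ n → Continuous (φ n))
    (hexp : IsAleph0Expansive φ) : IsCwExpansive φ := by
  obtain ⟨c, hc, h⟩ := stmt13_general hexp
  exact ⟨c, hc, fun C hC hconn hnt => (h C hconn.isPreconnected hnt).imp fun n =>
    lt_diam_of_ofReal_lt_ediam (hC.image (continuous_phiComp hφ n)).isBounded⟩
end

section
/- Let (X,d) be an uncountable Lindelöf metric space and let φ_n : X → X (n ≥ 1) be a sequence of continuous maps such that the system (X, φ_{1,∞}) is uniformly equicontinuous. Then (X, φ_{1,∞}) is not ℵ₀-expansive. -/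
open Set Metric Filter Topology

theorem countable_of_isLindelof_of_countable_mem_nhdsWithin {X : Type*} [TopologicalSpace X]
    {s : Set X} (hs : IsLindelof s) (h : ∀ x ∈ s, ∃ t ∈ 𝓝[s] x, t.Countable) : s.Countable :=
  hs.induction_on (fun _ _ hst ht => ht.mono hst)
    (fun _ hS hcount => hS.sUnion hcount) h

open scoped Uniformity in
theorem countable_of_isLindelof_of_equicontinuousOn {ι X α : Type*} [TopologicalSpace X]
    [UniformSpace α] {F : ι → X → α} {s : Set X} {U : Set (α × α)} (hs : IsLindelof s)
    (hF : EquicontinuousOn F s) (hU : U ∈ 𝓤 α)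
    (hcount : ∀ x ∈ s, {y | ∀ i, (F i x, F i y) ∈ U}.Countable) : s.Countable :=
  countable_of_isLindelof_of_countable_mem_nhdsWithin hs fun x hx =>
    ⟨{y | ∀ i, (F i x, F i y) ∈ U}, hF x hx U hU, hcount x hx⟩

theorem uniformEquicontinuous_iff_dist_le {ι α β : Type*} [PseudoMetricSpace α]
    [PseudoMetricSpace β] {F : ι → β → α} :
    UniformEquicontinuous F ↔ ∀ ε > (0 : ℝ), ∃ δ > (0 : ℝ), ∀ x y, dist x y ≤ δ →
      ∀ i, dist (F i x) (F i y) ≤ ε :=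
  uniformity_basis_dist_le.uniformEquicontinuous_iff uniformity_basis_dist_le

open scoped Uniformity in
theorem stmt14_general {X : Type*} [MetricSpace X] [LindelofSpace X]
    (hX : ¬ (Set.univ : Set X).Countable) (φ : ℕ → X → X)
    (hequi : Equicontinuous (phiComp φ)) : ¬ IsAleph0Expansive φ := by
  rintro ⟨c, hc, hcount⟩
  have hU : {p : X × X | dist p.1 p.2 ≤ c} ∈ 𝓤 X :=
    uniformity_basis_dist_le.mem_of_mem hc
  exact hX (countable_of_isLindelof_of_equicontinuousOn isLindelof_univ
    (hequi.equicontinuousOn univ) hU fun x _ => hcount x)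

/-- On an uncountable Lindelöf metric space, a uniformly equicontinuous
non-autonomous system is never ℵ₀-expansive. -/
theorem stmt14 {X : Type*} [MetricSpace X] [LindelofSpace X]
    (hX : ¬ (Set.univ : Set X).Countable)
    (φ : ℕ → X → X) (hφ : ∀ n, 1 ≤ n → Continuous (φ n))
    (hequi : ∀ ε > (0 : ℝ), ∃ δ > (0 : ℝ), ∀ x y : X, dist x y ≤ δ →
      ∀ n : ℕ, dist (phiComp φ n x) (phiComp φ n y) ≤ ε) :
    ¬ IsAleph0Expansive φ :=
  stmt14_general hX φ (uniformEquicontinuous_iff_dist_le.mpr hequi).equicontinuous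
end

section
/- Let (X,d) be a metric space, let φ_n : X → X (n ≥ 1) be a sequence of continuous maps, let n₀ ≥ 1 be a natural number, and let F ⊆ X be such that X∖F is finite. Then (X, φ_{1,∞}) is n₀-expansive if and only if it is n₀-expansive on F, i.e. there exists c > 0 such that for every x ∈ F the set {y ∈ F : d(φ₁^i(x), φ₁^i(y)) ≤ c for all i ∈ ℕ} has at most n₀ elements. -/
open Set Metric Filter Topology

/-!
Points of `F` have dynamic balls with at most `n₀` elements of `F`, so by the triangle inequality
the balls of half the radius around *every* point contain only finitely many elements of `F`, hence
finitely many points altogether. As the maps `φ₁ⁱ` separate points (already `φ₁⁰ = id` does),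
shrinking the radius reduces the balls around the finitely many points outside `F` to their
centres. By symmetry, balls of that radius around points of `F` then stay inside `F`.
-/

section DynamicBall

variable {ι X Y : Type*}

section PseudoMetric

variable [PseudoMetricSpace Y]

/-- The closed dynamic ball `Γ_c(x)` of radius `c` around `x`: the points whose orbit stays
`c`-close to that of `x`. The orbit of `x` under a family of maps `f` is `i ↦ f i x`; for a
non-autonomous system the family is `f i = φ₁ⁱ`. -/
def dynamicBall (f : ι → X → Y) (c : ℝ) (x : X) : Set X :=
  {y | ∀ i, dist (f i x) (f i y) ≤ c}

/-- The family of maps `f` is `n₀`-expansive on `F`. Only the elements of `F` in a dynamic ball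
are counted; expansiveness of the whole system is the case `F = univ`. -/
def IsNExpansiveOn (f : ι → X → Y) (n₀ : ℕ) (F : Set X) : Prop :=
  ∃ c > (0 : ℝ), ∀ x ∈ F, (F ∩ dynamicBall f c x).encard ≤ n₀

variable {f : ι → X → Y} {a b c : ℝ} {x y : X} {n₀ : ℕ} {F : Set X}

lemma mem_dynamicBall_comm : y ∈ dynamicBall f c x ↔ x ∈ dynamicBall f c y := by
  simp only [dynamicBall, mem_ofPred_eq, dist_comm]

lemma dynamicBall_mono (hab : a ≤ b) (x : X) : dynamicBall f a x ⊆ dynamicBall f b x :=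
  fun _ hy i ↦ (hy i).trans hab

lemma dynamicBall_subset_dynamicBall_add (hy : y ∈ dynamicBall f a x) :
    dynamicBall f b x ⊆ dynamicBall f (a + b) y :=
  fun _ hz i ↦ (dist_triangle_left _ _ (f i x)).trans (add_le_add (hy i) (hz i))

lemma IsNExpansiveOn.exists_forall_finite_inter_dynamicBall (hF : IsNExpansiveOn f n₀ F) :
    ∃ c > (0 : ℝ), ∀ x, (F ∩ dynamicBall f c x).Finite := by
  obtain ⟨c, hc, hcard⟩ := hF
  refine ⟨c / 2, half_pos hc, fun x ↦ ?_⟩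
  rcases (F ∩ dynamicBall f (c / 2) x).eq_empty_or_nonempty with hempty | ⟨y, hyF, hyx⟩
  · exact hempty ▸ finite_empty
  · have hball : dynamicBall f (c / 2) x ⊆ dynamicBall f c y := by
      simpa only [add_halves] using dynamicBall_subset_dynamicBall_add (b := c / 2) hyx
    exact (finite_of_encard_le_coe (hcard y hyF)).subset (inter_subset_inter_right F hball)

end PseudoMetric

variable [MetricSpace Y] {f : ι → X → Y} {x y : X} {n₀ : ℕ} {F G S : Set X}

lemma eventually_notMem_dynamicBall (hf : (range f).SeparatesPoints) (hxy : x ≠ y) :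
    ∀ᶠ c in 𝓝 (0 : ℝ), y ∉ dynamicBall f c x := by
  obtain ⟨_, ⟨i, rfl⟩, hi⟩ := hf hxy
  filter_upwards [eventually_lt_nhds (dist_pos.2 hi)] with c hc hy
  exact (hy i).not_gt hc

lemma eventually_inter_dynamicBall_subset_singleton_of_finite (hf : (range f).SeparatesPoints)
    (hS : S.Finite) (x : X) :
    ∀ᶠ c in 𝓝 (0 : ℝ), S ∩ dynamicBall f c x ⊆ {x} := by
  have hne : ∀ᶠ c in 𝓝 (0 : ℝ), ∀ y ∈ S \ {x}, y ∉ dynamicBall f c x :=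
    (eventually_all_finite hS.sdiff).2 fun y hy ↦
      eventually_notMem_dynamicBall hf (Ne.symm hy.2)
  filter_upwards [hne] with c hc y hy
  by_contra hyx
  exact hc y ⟨hy.1, hyx⟩ hy.2

lemma IsNExpansiveOn.eventually_inter_dynamicBall_subset_singleton (hF : IsNExpansiveOn f n₀ F)
    (hf : (range f).SeparatesPoints) (hGF : (G \ F).Finite) (x : X) :
    ∀ᶠ c in 𝓝 (0 : ℝ), G ∩ dynamicBall f c x ⊆ {x} := by
  obtain ⟨r, hr, hfin⟩ := hF.exists_forall_finite_inter_dynamicBall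
  have hG : (G ∩ dynamicBall f r x).Finite := by
    refine ((hfin x).union hGF).subset fun y hy ↦ ?_
    by_cases hyF : y ∈ F
    · exact .inl ⟨hyF, hy.2⟩
    · exact .inr ⟨hy.1, hyF⟩
  filter_upwards [eventually_inter_dynamicBall_subset_singleton_of_finite hf hG x,
    eventually_lt_nhds hr] with c hc hcr y hy
  exact hc ⟨⟨hy.1, dynamicBall_mono hcr.le x hy.2⟩, hy.2⟩

theorem IsNExpansiveOn.of_finite_sdiff (hF : IsNExpansiveOn f n₀ F)
    (hf : (range f).SeparatesPoints) (hn₀ : 1 ≤ n₀) (hGF : (G \ F).Finite) :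
    IsNExpansiveOn f n₀ G := by
  have hsingle : ∀ᶠ c in 𝓝 (0 : ℝ), ∀ p ∈ G \ F, G ∩ dynamicBall f c p ⊆ {p} :=
    (eventually_all_finite hGF).2 fun p _ ↦
      hF.eventually_inter_dynamicBall_subset_singleton hf hGF p
  obtain ⟨r, hr, hcard⟩ := hF
  obtain ⟨c, hc, hsingle, hcr⟩ := (hsingle.and (eventually_lt_nhds hr)).exists_gt
  refine ⟨c, hc, fun x hxG ↦ ?_⟩
  by_cases hxF : x ∈ F
  · have hsub : G ∩ dynamicBall f c x ⊆ F ∩ dynamicBall f r x := by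
      rintro y ⟨hyG, hyx⟩
      refine ⟨?_, dynamicBall_mono hcr.le x hyx⟩
      by_contra hyF
      have hxy : x = y := hsingle y ⟨hyG, hyF⟩ ⟨hxG, mem_dynamicBall_comm.1 hyx⟩
      exact hyF (hxy ▸ hxF)
    exact (encard_le_encard hsub).trans (hcard x hxF)
  · calc (G ∩ dynamicBall f c x).encard
        ≤ ({x} : Set X).encard := encard_le_encard (hsingle x ⟨hxG, hxF⟩)
      _ = 1 := encard_singleton x
      _ ≤ n₀ := mod_cast hn₀

theorem stmt15_general (hf : (range f).SeparatesPoints) (hn₀ : 1 ≤ n₀)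
    (hFG : (symmDiff F G).Finite) : IsNExpansiveOn f n₀ F ↔ IsNExpansiveOn f n₀ G :=
  ⟨fun hF ↦ hF.of_finite_sdiff hf hn₀ (hFG.subset subset_union_right),
    fun hG ↦ hG.of_finite_sdiff hf hn₀ (hFG.subset subset_union_left)⟩

end DynamicBall

lemma separatesPoints_range_phiComp {X : Type*} (φ : ℕ → X → X) :
    (range (phiComp φ)).SeparatesPoints :=
  fun _ _ hxy ↦ ⟨id, ⟨0, rfl⟩, hxy⟩

lemma isNExpansiveOn_phiComp_univ {X : Type*} [MetricSpace X] {φ : ℕ → X → X} {n₀ : ℕ} :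
    IsNExpansiveOn (phiComp φ) n₀ univ ↔ IsNExpansive φ n₀ := by
  simp only [IsNExpansiveOn, IsNExpansive, dynamicBall, mem_univ, true_imp_iff, univ_inter]

/-- If `X \ F` is finite, then `(X, φ_{1,∞})` is `n₀`-expansive iff it is
`n₀`-expansive on `F`. -/
theorem stmt15 {X : Type*} [MetricSpace X] (φ : ℕ → X → X)
    (hφ : ∀ n, 1 ≤ n → Continuous (φ n))
    (n₀ : ℕ) (hn₀ : 1 ≤ n₀) (F : Set X) (hF : Fᶜ.Finite) :
    IsNExpansive φ n₀ ↔
      ∃ c > (0 : ℝ), ∀ x ∈ F,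
        {y ∈ F | ∀ i : ℕ, dist (phiComp φ i x) (phiComp φ i y) ≤ c}.encard ≤ (n₀ : ℕ∞) :=
  isNExpansiveOn_phiComp_univ.symm.trans <|
    stmt15_general (separatesPoints_range_phiComp φ) hn₀ (by rwa [← top_eq_univ, top_symmDiff])
end

section
/- Let (X₁,d₁) and (X₂,d₂) be metric spaces carrying non-autonomous systems φ_{1,∞} and ψ_{1,∞} respectively, and suppose there is a homeomorphism h : X₁ → X₂ such that both h and h⁻¹ are uniformly continuous and h ∘ φ_n = ψ_n ∘ h for all n ≥ 1. If (X₁, φ_{1,∞}) is meagre-expansive, then (X₂, ψ_{1,∞}) is meagre-expansive. -/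
open Set Metric Filter Topology

/-! Suppose `g` semiconjugates `ψ` to `φ`. By uniform continuity of `g`, `ψ`-orbits that stay
`δ`-close are sent to `φ`-orbits that stay `c`-close, so each set of points shadowing a `ψ`-orbit
lies in the `g`-preimage of such a set for `φ`. If `g` is moreover open, preimages of nowhere dense
sets are nowhere dense. For a uniform conjugacy `h`, take `g = h⁻¹`. -/

/-- The set `Γ_c(x)` of points whose `φ`-orbit stays within distance `c` of the orbit of `x`.
Meagre-expansiveness says that, for some `c > 0`, all these sets are nowhere dense. Time `0` is
included, so `Γ_c(x)` is contained in the closed ball of radius `c` about `x`. -/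
def shadowingSet {X : Type*} [PseudoMetricSpace X] (φ : ℕ → X → X) (c : ℝ) (x : X) : Set X :=
  {y | ∀ i, dist (phiComp φ i x) (phiComp φ i y) ≤ c}

theorem semiconj_phiComp {X Y : Type*} {φ : ℕ → X → X} {ψ : ℕ → Y → Y} {g : Y → X}
    (hsemi : ∀ n, 1 ≤ n → Function.Semiconj g (ψ n) (φ n)) (n : ℕ) :
    Function.Semiconj g (phiComp ψ n) (phiComp φ n) := by
  induction n with
  | zero => exact Function.Semiconj.id_right
  | succ n ih => exact (hsemi (n + 1) n.succ_pos).comp_right ih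

theorem exists_shadowingSet_subset_preimage {X Y : Type*} [PseudoMetricSpace X]
    [PseudoMetricSpace Y] {φ : ℕ → X → X} {ψ : ℕ → Y → Y} {g : Y → X} (hg : UniformContinuous g)
    (hsemi : ∀ n, 1 ≤ n → Function.Semiconj g (ψ n) (φ n)) {c : ℝ} (hc : 0 < c) :
    ∃ δ > 0, ∀ y, shadowingSet ψ δ y ⊆ g ⁻¹' shadowingSet φ c (g y) := by
  obtain ⟨δ, hδ, hclose⟩ := Metric.uniformContinuous_iff_le.1 hg c hc
  refine ⟨δ, hδ, fun y z hz i => ?_⟩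
  have horbit := semiconj_phiComp hsemi i
  rw [← horbit y, ← horbit z]
  exact hclose (hz i)

theorem isNowhereDense_preimage {X Y : Type*} [TopologicalSpace X] [TopologicalSpace Y]
    {g : Y → X} (hg : Continuous g) (hopen : IsOpenMap g) {s : Set X} (hs : IsNowhereDense s) :
    IsNowhereDense (g ⁻¹' s) := by
  rw [IsNowhereDense] at hs ⊢
  rw [← hopen.preimage_closure_eq_closure_preimage hg,
    ← hopen.preimage_interior_eq_interior_preimage hg, hs, preimage_empty]

theorem stmt17_general {X Y : Type*} [MetricSpace X] [MetricSpace Y] {φ : ℕ → X → X}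
    {ψ : ℕ → Y → Y} {g : Y → X} (hg : UniformContinuous g) (hopen : IsOpenMap g)
    (hsemi : ∀ n, 1 ≤ n → Function.Semiconj g (ψ n) (φ n)) (hexp : IsMeagreExpansive φ) :
    IsMeagreExpansive ψ := by
  obtain ⟨c, hc, hφ⟩ := hexp
  obtain ⟨δ, hδ, hsub⟩ := exists_shadowingSet_subset_preimage hg hsemi hc
  exact ⟨δ, hδ, fun y => (isNowhereDense_preimage hg.continuous hopen (hφ (g y))).mono (hsub y)⟩

/-- Meagre-expansiveness is preserved by uniform conjugacy. -/
theorem stmt17 {X₁ X₂ : Type*} [MetricSpace X₁] [MetricSpace X₂]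
    (φ : ℕ → X₁ → X₁) (ψ : ℕ → X₂ → X₂)
    (hφ : ∀ n, 1 ≤ n → Continuous (φ n)) (hψ : ∀ n, 1 ≤ n → Continuous (ψ n))
    (h : X₁ ≃ₜ X₂) (hu : UniformContinuous h) (hu' : UniformContinuous h.symm)
    (hconj : ∀ n, 1 ≤ n → (h : X₁ → X₂) ∘ φ n = ψ n ∘ (h : X₁ → X₂))
    (hexp : IsMeagreExpansive φ) : IsMeagreExpansive ψ :=
  stmt17_general hu' h.symm.isOpenMap (fun n hn =>
    (Function.semiconj_iff_comp_eq.2 (hconj n hn)).inverse_left h.left_inv h.right_inv) hexp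
end
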